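/- (Theorem 5 of the paper.) Let m ≥ 1, d = 2m, let J = [[0, I_m], [−I_m, 0]], let H : ℝ^d → ℝ be C^∞, and let y : [0, h₀] → ℝ^d solve y' = J∇H(y), y(0) = y₀. Let s > ν ≥ 1, k ≥ s, and let (c_ℓ, b_ℓ)_{ℓ=1}^k be a quadrature on [0,1] exact for polynomials of degree ≤ 2k−1. Suppose that for each h ∈ (0, h₀] there is a polynomial map u_h : [0,h] → ℝ^d of degree ≤ s, with u_h(0) = y₀ and range in a fixed compact set, satisfying u_h'(ch) = Σ_{j=0}^{s−1} P_j(c) η̂_j(h) γ̂_j(h) for c ∈ [0,1], where γ̂_j(h) = Σ_{ℓ=1}^k b_ℓ P_j(c_ℓ) J∇H(u_h(c_ℓ h)), η̂_j(h) = 1 for j ≤ s−ν−1 and η̂_j(h) = 1 − h^{2(s−1−j)} α̂_j(h) for s−ν ≤ j ≤ s−1, with each α̂_j(h) = O(h²). Then ‖u_h(h) − y(h)‖ = O(h^{2s+1}) as h → 0⁺; i.e., the method has order 2s. -/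

import Mathlib

open MeasureTheory Polynomial Matrix

/-- The shifted Legendre polynomial `P j`, orthonormal on `[0,1]`. -/
noncomputable def legP (j : ℕ) : ℝ → ℝ := fun x =>
  (Real.sqrt (2 * j + 1) / (Nat.factorial j)) *
    (Polynomial.derivative^[j] ((Polynomial.X ^ 2 - Polynomial.X) ^ j)).eval x

/-- The phase space `ℝ^{2m}`, with coordinates indexed by `Fin m ⊕ Fin m`. -/
abbrev ESp (m : ℕ) := EuclideanSpace ℝ (Fin m ⊕ Fin m)

/-- The canonical skew-symmetric matrix `J = [[0, I_m], [-I_m, 0]]`. -/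
noncomputable def Jmat (m : ℕ) : Matrix (Fin m ⊕ Fin m) (Fin m ⊕ Fin m) ℝ :=
  Matrix.fromBlocks 0 1 (-1) 0


noncomputable def legPoly (j : ℕ) : ℝ[X] :=
  C (Real.sqrt (2 * j + 1) / (Nat.factorial j)) *
    Polynomial.derivative^[j] ((Polynomial.X ^ 2 - Polynomial.X) ^ j)

lemma legP_eq (j : ℕ) (x : ℝ) : legP j x = (legPoly j).eval x := by
  simp [legP, legPoly]

lemma intPoly_integrable (p : ℝ[X]) : IntervalIntegrable (fun x => p.eval x) volume 0 1 :=
  p.continuous.intervalIntegrable _ _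

lemma int_deriv (p : ℝ[X]) : ∫ x in (0:ℝ)..1, (derivative p).eval x = p.eval 1 - p.eval 0 :=
  intervalIntegral.integral_eq_sub_of_hasDerivAt (fun x _ => p.hasDerivAt x)
    (intPoly_integrable _)

lemma int_parts (p q : ℝ[X]) (h0 : p.eval 0 = 0) (h1 : p.eval 1 = 0) :
    ∫ x in (0:ℝ)..1, (derivative p * q).eval x = - ∫ x in (0:ℝ)..1, (p * derivative q).eval x := by
  have h := int_deriv (p * q)
  simp only [derivative_mul, eval_add] at h
  rw [intervalIntegral.integral_add (intPoly_integrable _) (intPoly_integrable _)] at h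
  simp only [eval_mul, h0, h1] at h ⊢
  linarith

lemma W_natDegree (j : ℕ) : ((X ^ 2 - X : ℝ[X]) ^ j).natDegree = 2 * j := by
  rw [natDegree_pow]
  have : (X ^ 2 - X : ℝ[X]).natDegree = 2 := by compute_degree!
  rw [this, mul_comm]

lemma W_monic (j : ℕ) : ((X ^ 2 - X : ℝ[X]) ^ j).Monic := by
  apply Monic.pow
  apply monic_X_pow_sub
  simp

lemma W_vanish (j i : ℕ) (hi : i < j) (x : ℝ) (hx : x ^ 2 - x = 0) :
    (derivative^[i] ((X ^ 2 - X : ℝ[X]) ^ j)).eval x = 0 := by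
  have h := pow_sub_dvd_iterate_derivative_of_pow_dvd (p := (X ^ 2 - X : ℝ[X]) ^ j)
    (q := X ^ 2 - X) (n := j) i dvd_rfl
  have h2 : (X ^ 2 - X : ℝ[X]) ∣ (X ^ 2 - X : ℝ[X]) ^ (j - i) := dvd_pow_self _ (by omega)
  obtain ⟨r, hr⟩ := h2.trans h
  rw [hr]
  simp [hx]

lemma int_iter (j i : ℕ) (hi : i ≤ j) (q : ℝ[X]) :
    ∫ x in (0:ℝ)..1, (derivative^[i] ((X ^ 2 - X : ℝ[X]) ^ j) * q).eval x =
      (-1) ^ i * ∫ x in (0:ℝ)..1, ((X ^ 2 - X : ℝ[X]) ^ j * derivative^[i] q).eval x := by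
  induction i generalizing q with
  | zero => simp
  | succ i ih =>
    rw [Function.iterate_succ_apply', int_parts _ _ (W_vanish _ _ (by omega) _ (by simp))
      (W_vanish _ _ (by omega) _ (by simp)), ih (by omega), Function.iterate_succ_apply]
    ring

lemma leg_orth (j : ℕ) (q : ℝ[X]) (hq : q.natDegree < j) :
    ∫ x in (0:ℝ)..1, legP j x * q.eval x = 0 := by
  have h := int_iter j j le_rfl q
  rw [iterate_derivative_eq_zero hq] at h
  simp only [mul_zero, eval_zero, intervalIntegral.integral_zero, eval_mul] at h
  simp only [legP, mul_assoc]
  rw [intervalIntegral.integral_const_mul, h, mul_zero]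

lemma beta_int (a b : ℕ) : ∫ x in (0:ℝ)..1, (X ^ a * (X - 1) ^ b : ℝ[X]).eval x =
    (-1) ^ b * (a.factorial * b.factorial / (a + b + 1).factorial) := by
  induction b generalizing a with
  | zero =>
    simp [Nat.factorial_succ]
    field_simp
  | succ b ih =>
    have h := int_deriv (X ^ (a + 1) * (X - 1) ^ (b + 1))
    have e : derivative (X ^ (a + 1) * (X - 1) ^ (b + 1) : ℝ[X]) =
      C (a + 1 : ℝ) * (X ^ a * (X - 1) ^ (b + 1)) + C (b + 1 : ℝ) * (X ^ (a + 1) * (X - 1) ^ b) := by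
      have : (X - 1 : ℝ[X]) = X - C 1 := by simp
      rw [derivative_mul, derivative_X_pow, this, derivative_X_sub_C_pow]
      simp
      ring
    rw [e] at h
    simp only [eval_add] at h
    rw [intervalIntegral.integral_add (intPoly_integrable _) (intPoly_integrable _)] at h
    simp only [eval_C_mul] at h
    rw [intervalIntegral.integral_const_mul, intervalIntegral.integral_const_mul, ih] at h
    simp at h
    have e2 : a + 1 + b + 1 = a + (b + 1) + 1 := by omega
    rw [e2] at h
    have h3 : ((a + (b + 1) + 1).factorial : ℝ) ≠ 0 := by positivity
    have h4 : (a + 1 : ℝ) ≠ 0 := by positivity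
    apply mul_left_cancel₀ h4
    simp only [eval_mul, eval_pow, eval_sub, eval_X, eval_one]
    rw [eq_neg_of_add_eq_zero_left h]
    simp only [Nat.factorial_succ a, Nat.factorial_succ b]
    push_cast
    field_simp
    ring

lemma leg_norm (j : ℕ) : ∫ x in (0:ℝ)..1, legP j x * legP j x = 1 := by
  have h := int_iter j j le_rfl (derivative^[j] ((X ^ 2 - X : ℝ[X]) ^ j))
  rw [← Function.iterate_add_apply] at h
  have e : derivative^[j + j] ((X ^ 2 - X : ℝ[X]) ^ j) = C ((2 * j).factorial : ℝ) := by
    have hd := W_natDegree j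
    have hm := W_monic j
    rw [← two_mul, eq_C_of_natDegree_le_zero (p := derivative^[2 * j] ((X ^ 2 - X : ℝ[X]) ^ j))
      (by have := natDegree_iterate_derivative ((X ^ 2 - X : ℝ[X]) ^ j) (2 * j); omega)]
    rw [coeff_iterate_derivative]
    simp only [zero_add, Nat.descFactorial_self]
    have : ((X ^ 2 - X : ℝ[X]) ^ j).coeff (2 * j) = 1 := by
      rw [← hd]; exact hm
    rw [this]; simp
  have e2 : (X ^ 2 - X : ℝ[X]) ^ j = X ^ j * (X - 1) ^ j := by
    rw [← mul_pow]; congr 1; ring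
  rw [e, e2] at h
  have hb := beta_int j j
  simp only [eval_mul, eval_C] at h hb
  rw [intervalIntegral.integral_mul_const, hb, ← e2] at h
  have e3 : ∀ x, legP j x * legP j x = (Real.sqrt (2 * j + 1) / (Nat.factorial j)) ^ 2 *
    (eval x (derivative^[j] ((X ^ 2 - X : ℝ[X]) ^ j)) * eval x (derivative^[j] ((X ^ 2 - X : ℝ[X]) ^ j))) := by
    intro x; simp only [legP]; ring
  simp only [e3]
  rw [intervalIntegral.integral_const_mul, h, div_pow, Real.sq_sqrt (by positivity)]
  have : j + j + 1 = 2 * j + 1 := by ring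
  rw [this, Nat.factorial_succ]
  have h1 : ((-1:ℝ) ^ j) * (-1) ^ j = 1 := by rw [← mul_pow]; simp
  push_cast
  have h5 : ((2 * j).factorial : ℝ) ≠ 0 := by positivity
  have h6 : (j.factorial : ℝ) ≠ 0 := by positivity
  field_simp
  linear_combination h1

lemma legPoly_natDegree_le (j : ℕ) : (legPoly j).natDegree ≤ j := by
  unfold legPoly
  refine (natDegree_C_mul_le _ _).trans ?_
  have := natDegree_iterate_derivative ((X ^ 2 - X : ℝ[X]) ^ j) j
  rw [W_natDegree] at this
  omega

lemma legPoly_coeff_ne (j : ℕ) : (legPoly j).coeff j ≠ 0 := by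
  intro h0
  have hd := legPoly_natDegree_le j
  by_cases hj : (legPoly j).natDegree < j
  · have h1 := leg_orth j (legPoly j) hj
    have h2 := leg_norm j
    simp only [legP_eq] at h1 h2
    rw [h1] at h2
    norm_num at h2
  · have : (legPoly j).natDegree = j := by omega
    have hl : (legPoly j).leadingCoeff = 0 := by rw [leadingCoeff, this, h0]
    rw [leadingCoeff_eq_zero] at hl
    have h2 := leg_norm j
    simp [legP_eq, hl] at h2

lemma leg_orthonormal (i j : ℕ) : ∫ x in (0:ℝ)..1, legP i x * legP j x = if i = j then 1 else 0 := by
  rcases lt_trichotomy i j with h | h | h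
  · rw [if_neg h.ne]
    have := leg_orth j (legPoly i) ((legPoly_natDegree_le i).trans_lt h)
    simp only [legP_eq] at this ⊢
    simpa [mul_comm] using this
  · subst h; simp [leg_norm]
  · rw [if_neg h.ne']
    have := leg_orth i (legPoly j) ((legPoly_natDegree_le j).trans_lt h)
    simpa only [legP_eq] using this

lemma legPoly_span (s : ℕ) (q : ℝ[X]) (hq : q.degree < s) :
    ∃ w : ℕ → ℝ, q = ∑ j ∈ Finset.range s, C (w j) * legPoly j := by
  induction s generalizing q with
  | zero =>
    refine ⟨0, ?_⟩
    simpa using hq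
  | succ s ih =>
    set r := q - C (q.coeff s / (legPoly s).coeff s) * legPoly s with hr
    have hr' : r.degree < s := by
      rw [degree_lt_iff_coeff_zero]
      intro n hn
      rcases hn.eq_or_lt with h | h
      · subst h
        simp [hr, div_mul_cancel₀ _ (legPoly_coeff_ne s)]
      · rw [degree_lt_iff_coeff_zero] at hq
        have : (legPoly s).coeff n = 0 :=
          coeff_eq_zero_of_natDegree_lt ((legPoly_natDegree_le s).trans_lt h)
        simp [hr, hq n h, this]
    obtain ⟨w, hw⟩ := ih r hr'
    refine ⟨fun j => if j = s then q.coeff s / (legPoly s).coeff s else w j, ?_⟩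
    rw [Finset.sum_range_succ, Finset.sum_congr rfl (g := fun j => C (w j) * legPoly j)]
    · rw [← hw]; simp [hr]
    · intro j hj
      rw [Finset.mem_range] at hj
      simp only [if_neg hj.ne]

/-- Reproducing property. -/
lemma leg_reproduce (s : ℕ) (q : ℝ[X]) (hq : q.degree < s) (x : ℝ) :
    ∑ j ∈ Finset.range s, legP j x * ∫ z in (0:ℝ)..1, legP j z * q.eval z = q.eval x := by
  obtain ⟨w, hw⟩ := legPoly_span s q hq
  have key : ∀ j ∈ Finset.range s, ∫ z in (0:ℝ)..1, legP j z * q.eval z = w j := by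
    intro j hj
    have : ∀ z, legP j z * q.eval z = ∑ i ∈ Finset.range s, w i * (legP j z * legP i z) := by
      intro z
      conv_lhs => rw [hw]
      rw [eval_finsetSum, Finset.mul_sum]
      refine Finset.sum_congr rfl fun i _ => ?_
      rw [eval_C_mul, legP_eq i]; ring
    simp only [this]
    rw [intervalIntegral.integral_finsetSum]
    · simp only [intervalIntegral.integral_const_mul, leg_orthonormal]
      simp only [mul_ite, mul_one, mul_zero]
      rw [Finset.sum_ite_eq, if_pos hj]
    · intro i _
      simp only [legP_eq]
      exact Continuous.intervalIntegrable (by fun_prop) _ _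
  rw [Finset.sum_congr rfl fun j hj => by rw [key j hj]]
  conv_rhs => rw [hw]
  rw [eval_finsetSum]
  refine Finset.sum_congr rfl fun i _ => ?_
  rw [eval_C_mul, legP_eq i]; ring

section generic

variable {E : Type*} [NormedAddCommGroup E] [NormedSpace ℝ E]

/-- vector valued polynomial of degree `< n`. -/
def vpoly (n : ℕ) (a : ℕ → E) (x : ℝ) : E := ∑ i ∈ Finset.range n, x ^ i • a i

lemma vpoly_continuous (n : ℕ) (a : ℕ → E) : Continuous (vpoly n a) := by
  unfold vpoly; fun_prop

/-- discrete Legendre coefficients. -/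
noncomputable def gam {k : ℕ} (c b : Fin k → ℝ) (G : ℝ → E) (j : ℕ) : E :=
  ∑ ℓ, (b ℓ * legP j (c ℓ)) • G (c ℓ)

lemma legP_continuous (j : ℕ) : Continuous (legP j) := by
  have : legP j = fun x => (legPoly j).eval x := funext (legP_eq j)
  rw [this]; fun_prop

lemma gam_sub {k : ℕ} (c b : Fin k → ℝ) (G G' : ℝ → E) (j : ℕ) :
    gam c b (fun x => G x - G' x) j = gam c b G j - gam c b G' j := by
  simp [gam, smul_sub]

lemma gam_norm_le {k : ℕ} (c b : Fin k → ℝ) (hc : ∀ ℓ, c ℓ ∈ Set.Icc (0:ℝ) 1) (G : ℝ → E) (j : ℕ)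
    (M : ℝ) (hG : ∀ x ∈ Set.Icc (0:ℝ) 1, ‖G x‖ ≤ M) :
    ‖gam c b G j‖ ≤ (∑ ℓ, |b ℓ * legP j (c ℓ)|) * M := by
  unfold gam
  refine (norm_sum_le _ _).trans ?_
  rw [Finset.sum_mul]
  refine Finset.sum_le_sum fun ℓ _ => ?_
  rw [norm_smul, Real.norm_eq_abs]
  exact mul_le_mul_of_nonneg_left (hG _ (hc ℓ)) (abs_nonneg _)

lemma quad_mono {k : ℕ} (c b : Fin k → ℝ)
    (hquad : ∀ q : Polynomial ℝ, q.natDegree ≤ 2 * k - 1 →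
      ∑ ℓ, b ℓ * q.eval (c ℓ) = ∫ x in (0:ℝ)..1, q.eval x)
    (j i : ℕ) (hji : j + i ≤ 2 * k - 1) :
    ∑ ℓ, b ℓ * legP j (c ℓ) * c ℓ ^ i = ∫ x in (0:ℝ)..1, legP j x * x ^ i := by
  have h := hquad (legPoly j * X ^ i) (by
    refine natDegree_mul_le.trans ?_
    have := legPoly_natDegree_le j
    simp only [natDegree_X_pow]; omega)
  simp only [legP_eq]
  simpa [mul_assoc] using h

lemma gam_vpoly {k : ℕ} (c b : Fin k → ℝ)
    (hquad : ∀ q : Polynomial ℝ, q.natDegree ≤ 2 * k - 1 →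
      ∑ ℓ, b ℓ * q.eval (c ℓ) = ∫ x in (0:ℝ)..1, q.eval x)
    (j n : ℕ) (hji : j + n ≤ 2 * k) (a : ℕ → E) :
    gam c b (vpoly n a) j =
      ∑ i ∈ Finset.range n, (∫ x in (0:ℝ)..1, legP j x * x ^ i) • a i := by
  unfold gam vpoly
  simp only [Finset.smul_sum]
  rw [Finset.sum_comm]
  refine Finset.sum_congr rfl fun i hi => ?_
  rw [Finset.mem_range] at hi
  rw [← quad_mono c b hquad j i (by omega), Finset.sum_smul]
  simp only [smul_smul]

lemma gam_bound {k : ℕ} (c b : Fin k → ℝ) (hc : ∀ ℓ, c ℓ ∈ Set.Icc (0:ℝ) 1)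
    (hquad : ∀ q : Polynomial ℝ, q.natDegree ≤ 2 * k - 1 →
      ∑ ℓ, b ℓ * q.eval (c ℓ) = ∫ x in (0:ℝ)..1, q.eval x)
    (j n : ℕ) (hnj : n ≤ j) (hjk : j < k) (a : ℕ → E) (G : ℝ → E) (M : ℝ)
    (hG : ∀ x ∈ Set.Icc (0:ℝ) 1, ‖G x - vpoly n a x‖ ≤ M) :
    ‖gam c b G j‖ ≤ (∑ ℓ, |b ℓ * legP j (c ℓ)|) * M := by
  have h0 : gam c b (vpoly n a) j = 0 := by
    rw [gam_vpoly c b hquad j n (by omega)]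
    refine Finset.sum_eq_zero fun i hi => ?_
    rw [Finset.mem_range] at hi
    have := leg_orth j (X ^ i) (by simp; omega)
    simp only [eval_pow, eval_X] at this
    rw [this, zero_smul]
  have := gam_norm_le c b hc (fun x => G x - vpoly n a x) j M hG
  rwa [gam_sub, h0, sub_zero] at this

lemma defect_vpoly {k s : ℕ} (hk : s ≤ k) (c b : Fin k → ℝ)
    (hquad : ∀ q : Polynomial ℝ, q.natDegree ≤ 2 * k - 1 →
      ∑ ℓ, b ℓ * q.eval (c ℓ) = ∫ x in (0:ℝ)..1, q.eval x)
    (a : ℕ → E) (x : ℝ) :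
    ∑ j ∈ Finset.range s, legP j x • gam c b (vpoly s a) j = vpoly s a x := by
  have : ∀ j ∈ Finset.range s, legP j x • gam c b (vpoly s a) j =
      ∑ i ∈ Finset.range s, (legP j x * ∫ x in (0:ℝ)..1, legP j x * x ^ i) • a i := by
    intro j hj
    rw [Finset.mem_range] at hj
    rw [gam_vpoly c b hquad j s (by omega), Finset.smul_sum]
    simp only [smul_smul]
  rw [Finset.sum_congr rfl this, Finset.sum_comm]
  unfold vpoly
  refine Finset.sum_congr rfl fun i hi => ?_
  rw [Finset.mem_range] at hi
  rw [← Finset.sum_smul]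
  have := leg_reproduce s (X ^ i) (by rw [degree_X_pow]; exact_mod_cast hi) x
  simp only [eval_pow, eval_X] at this
  rw [this]

lemma poly_bdd (p : ℝ[X]) : ∃ M, 0 ≤ M ∧ ∀ x ∈ Set.Icc (0:ℝ) 1, |p.eval x| ≤ M := by
  obtain ⟨M, hM⟩ := (isCompact_Icc (a := (0:ℝ)) (b := 1)).exists_bound_of_continuousOn
    p.continuous.continuousOn
  exact ⟨M, (norm_nonneg _).trans (hM 0 (by simp)), hM⟩

lemma legP_bdd (j : ℕ) : ∃ M, 0 ≤ M ∧ ∀ x ∈ Set.Icc (0:ℝ) 1, |legP j x| ≤ M := by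
  obtain ⟨M, hM⟩ := poly_bdd (legPoly j)
  exact ⟨M, by simpa only [legP_eq] using hM⟩

lemma defect_bound {k s : ℕ} (hk : s ≤ k) (c b : Fin k → ℝ) (hc : ∀ ℓ, c ℓ ∈ Set.Icc (0:ℝ) 1)
    (hquad : ∀ q : Polynomial ℝ, q.natDegree ≤ 2 * k - 1 →
      ∑ ℓ, b ℓ * q.eval (c ℓ) = ∫ x in (0:ℝ)..1, q.eval x) :
    ∃ C, 0 ≤ C ∧ ∀ (a : ℕ → E) (G : ℝ → E) (M : ℝ)
      (_ : ∀ x ∈ Set.Icc (0:ℝ) 1, ‖G x - vpoly s a x‖ ≤ M),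
      ∀ x ∈ Set.Icc (0:ℝ) 1,
        ‖∑ j ∈ Finset.range s, legP j x • gam c b G j - G x‖ ≤ C * M := by
  choose P hP0 hP using legP_bdd
  refine ⟨∑ j ∈ Finset.range s, P j * (∑ ℓ, |b ℓ * legP j (c ℓ)|) + 1, ?_, ?_⟩
  · have : ∀ j ∈ Finset.range s, 0 ≤ P j * (∑ ℓ, |b ℓ * legP j (c ℓ)|) := fun j _ =>
      mul_nonneg (hP0 j) (Finset.sum_nonneg fun _ _ => abs_nonneg _)
    have := Finset.sum_nonneg this
    linarith
  intro a G M hG x hx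
  have e : ∑ j ∈ Finset.range s, legP j x • gam c b G j - G x =
    ∑ j ∈ Finset.range s, legP j x • gam c b (fun x => G x - vpoly s a x) j
      - (G x - vpoly s a x) := by
    simp only [gam_sub, smul_sub, Finset.sum_sub_distrib, defect_vpoly hk c b hquad]
    abel
  rw [e]
  refine (norm_sub_le _ _).trans ?_
  rw [add_mul, one_mul, Finset.sum_mul]
  refine add_le_add ((norm_sum_le _ _).trans ?_) (hG x hx)
  refine Finset.sum_le_sum fun j _ => ?_
  rw [norm_smul, Real.norm_eq_abs, mul_assoc]
  exact mul_le_mul (hP j x hx) (gam_norm_le c b hc _ j M hG) (norm_nonneg _) (hP0 j)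

lemma moment_eq [CompleteSpace E] {k s : ℕ} (c b : Fin k → ℝ) (i : ℕ) (hi : i < s) (G : ℝ → E) :
    ∫ x in (0:ℝ)..1, x ^ i • ∑ j ∈ Finset.range s, legP j x • gam c b G j =
      ∑ ℓ, (b ℓ * c ℓ ^ i) • G (c ℓ) := by
  have h1 : ∀ x : ℝ, x ^ i • ∑ j ∈ Finset.range s, legP j x • gam c b G j =
      ∑ j ∈ Finset.range s, (legP j x * x ^ i) • gam c b G j := by
    intro x
    rw [Finset.smul_sum]
    refine Finset.sum_congr rfl fun j _ => ?_
    rw [smul_smul, mul_comm]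
  simp only [h1]
  rw [intervalIntegral.integral_finsetSum]
  swap
  · intro j _
    have := legP_continuous j
    exact Continuous.intervalIntegrable (by fun_prop) _ _
  simp only [intervalIntegral.integral_smul_const]
  unfold gam
  simp only [Finset.smul_sum]
  rw [Finset.sum_comm]
  refine Finset.sum_congr rfl fun ℓ _ => ?_
  simp only [smul_smul]
  rw [← Finset.sum_smul]
  have := leg_reproduce s (X ^ i) (by rw [degree_X_pow]; exact_mod_cast hi) (c ℓ)
  simp only [eval_pow, eval_X] at this
  rw [← this, Finset.mul_sum]
  congr 1
  refine Finset.sum_congr rfl fun j _ => ?_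
  ring

lemma moment_bound [CompleteSpace E] {k s : ℕ} (hk : s ≤ k) (c b : Fin k → ℝ)
    (hc : ∀ ℓ, c ℓ ∈ Set.Icc (0:ℝ) 1)
    (hquad : ∀ q : Polynomial ℝ, q.natDegree ≤ 2 * k - 1 →
      ∑ ℓ, b ℓ * q.eval (c ℓ) = ∫ x in (0:ℝ)..1, q.eval x)
    (i : ℕ) (hi : i < s) (a : ℕ → E) (G : ℝ → E) (hGc : Continuous G) (M : ℝ)
    (hG : ∀ x ∈ Set.Icc (0:ℝ) 1, ‖G x - vpoly (2 * s - i) a x‖ ≤ M) :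
    ‖∫ x in (0:ℝ)..1, x ^ i • (∑ j ∈ Finset.range s, legP j x • gam c b G j - G x)‖
      ≤ (∑ ℓ, |b ℓ| + 1) * M := by
  have hvc := vpoly_continuous (2 * s - i) a
  have hp : ∑ ℓ, (b ℓ * c ℓ ^ i) • vpoly (2 * s - i) a (c ℓ) =
      ∫ x in (0:ℝ)..1, x ^ i • vpoly (2 * s - i) a x := by
    unfold vpoly
    simp only [Finset.smul_sum, smul_smul]
    rw [Finset.sum_comm, intervalIntegral.integral_finsetSum]
    · refine Finset.sum_congr rfl fun n hn => ?_
      rw [Finset.mem_range] at hn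
      rw [intervalIntegral.integral_smul_const, ← Finset.sum_smul]
      congr 1
      have := hquad (X ^ (i + n)) (by simp only [natDegree_X_pow]; omega)
      simpa [pow_add, mul_assoc] using this
    · intro n _
      exact Continuous.intervalIntegrable (by fun_prop) _ _
  have hlc : Continuous fun x : ℝ => x ^ i • ∑ j ∈ Finset.range s, legP j x • gam c b G j := by
    have := legP_continuous
    fun_prop
  have e : ∫ x in (0:ℝ)..1, x ^ i • (∑ j ∈ Finset.range s, legP j x • gam c b G j - G x) =
      ∑ ℓ, (b ℓ * c ℓ ^ i) • (G (c ℓ) - vpoly (2 * s - i) a (c ℓ))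
        - ∫ x in (0:ℝ)..1, x ^ i • (G x - vpoly (2 * s - i) a x) := by
    simp only [smul_sub, Finset.sum_sub_distrib]
    rw [intervalIntegral.integral_sub (hlc.intervalIntegrable _ _)
      (Continuous.intervalIntegrable (by fun_prop) _ _), moment_eq c b i hi,
      intervalIntegral.integral_sub (Continuous.intervalIntegrable (by fun_prop) _ _)
      (Continuous.intervalIntegrable (by fun_prop) _ _), hp]
    abel
  rw [e]
  refine (norm_sub_le _ _).trans ?_
  rw [add_mul, one_mul, Finset.sum_mul]
  refine add_le_add ((norm_sum_le _ _).trans (Finset.sum_le_sum fun ℓ _ => ?_)) ?_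
  · rw [norm_smul, Real.norm_eq_abs, abs_mul]
    have h1 : |c ℓ ^ i| ≤ 1 := by
      rw [abs_pow, abs_of_nonneg (hc ℓ).1]; exact pow_le_one₀ (hc ℓ).1 (hc ℓ).2
    have h2 := hG _ (hc ℓ)
    refine mul_le_mul ?_ h2 (norm_nonneg _) (abs_nonneg _)
    exact mul_le_of_le_one_right (abs_nonneg _) h1
  · have := intervalIntegral.norm_integral_le_of_norm_le_const (a := (0:ℝ)) (b := 1) (C := M)
      (f := fun x => x ^ i • (G x - vpoly (2 * s - i) a x)) ?_
    · simpa using this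
    · intro x hx
      rw [Set.uIoc_of_le zero_le_one] at hx
      have h2 := hG x ⟨hx.1.le, hx.2⟩
      have h1 : |x ^ i| ≤ 1 := by
        rw [abs_pow, abs_of_nonneg hx.1.le]; exact pow_le_one₀ hx.1.le hx.2
      rw [norm_smul, Real.norm_eq_abs]
      exact (mul_le_of_le_one_left (norm_nonneg _) h1).trans h2

lemma iterDeriv_poly (S : Finset ℕ) (W : ℕ → E) (n : ℕ) (p : ℕ → ℝ[X]) (x : ℝ)
    (hx : x ∈ Set.Icc (0:ℝ) 1) :
    iteratedDerivWithin n (fun x => ∑ j ∈ S, (p j).eval x • W j) (Set.Icc 0 1) x =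
      ∑ j ∈ S, (derivative^[n] (p j)).eval x • W j := by
  induction n generalizing p x with
  | zero => simp
  | succ n ih =>
    rw [iteratedDerivWithin_succ']
    have : Set.EqOn (derivWithin (fun x => ∑ j ∈ S, (p j).eval x • W j) (Set.Icc 0 1))
        (fun x => ∑ j ∈ S, (derivative (p j)).eval x • W j) (Set.Icc 0 1) := by
      intro z hz
      refine HasDerivWithinAt.derivWithin ?_ (uniqueDiffOn_Icc zero_lt_one z hz)
      refine HasDerivAt.hasDerivWithinAt ?_
      refine HasDerivAt.fun_sum fun j _ => ?_
      exact ((p j).hasDerivAt z).smul_const (W j)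
    rw [iteratedDerivWithin_congr this hx, ih _ x hx]
    simp only [Function.iterate_succ_apply]

end generic

section bootstrap

open Filter Topology

variable {E : Type*} [NormedAddCommGroup E] [NormedSpace ℝ E]

def BD (U : ℝ → ℝ → E) (n : ℕ) : Prop :=
  ∃ C, 0 ≤ C ∧ ∀ᶠ h in 𝓝[>] (0:ℝ), ∀ x ∈ Set.Icc (0:ℝ) 1, ∀ i, 1 ≤ i → i ≤ n →
    ‖iteratedDerivWithin i (U h) (Set.Icc 0 1) x‖ ≤ (C * h) ^ i

lemma ev_pos : ∀ᶠ h in 𝓝[>] (0:ℝ), 0 < h := eventually_mem_nhdsWithin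

lemma ev_le_one : ∀ᶠ h in 𝓝[>] (0:ℝ), h ≤ 1 :=
  eventually_nhdsWithin_of_eventually_nhds (eventually_le_nhds zero_lt_one)

lemma approx_of_BD (f : E → E) (hf : ContDiff ℝ (⊤ : ℕ∞) f) (K : Set E) (hK : IsCompact K)
    (U : ℝ → ℝ → E) (hUK : ∀ᶠ h in 𝓝[>] (0:ℝ), ∀ x ∈ Set.Icc (0:ℝ) 1, U h x ∈ K)
    (hUc : ∀ᶠ h in 𝓝[>] (0:ℝ), ContDiff ℝ (⊤ : ℕ∞) (U h)) (n : ℕ) (hB : BD U n) :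
    ∃ C, 0 ≤ C ∧ ∀ᶠ h in 𝓝[>] (0:ℝ), ∃ a : ℕ → E, ∀ x ∈ Set.Icc (0:ℝ) 1,
      ‖f (U h x) - vpoly n a x‖ ≤ C * h ^ n := by
  rcases n with _ | n
  · obtain ⟨M, hM⟩ := hK.exists_bound_of_continuousOn hf.continuous.continuousOn
    refine ⟨max M 0, le_max_right _ _, ?_⟩
    filter_upwards [hUK] with h h1
    refine ⟨0, fun x hx => ?_⟩
    simp only [vpoly, Finset.range_zero, Finset.sum_empty, sub_zero, pow_zero, mul_one]
    exact (hM _ (h1 x hx)).trans (le_max_left _ _)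
  · obtain ⟨C, hC0, hC⟩ := hB
    have hb : ∀ i : ℕ, ∃ M, ∀ z ∈ K, ‖iteratedFDeriv ℝ i f z‖ ≤ M := fun i =>
      hK.exists_bound_of_continuousOn
        (hf.continuous_iteratedFDeriv (by exact_mod_cast le_top)).continuousOn
    choose M hM using hb
    set Mx := ∑ i ∈ Finset.range (n + 2), |M i| with hMx
    have hMx0 : 0 ≤ Mx := Finset.sum_nonneg fun _ _ => abs_nonneg _
    refine ⟨(n + 1).factorial * Mx * C ^ (n + 1), by positivity, ?_⟩
    filter_upwards [hUK, hUc, hC, ev_pos] with h h1 h2 h3 hpos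
    have hud : UniqueDiffOn ℝ (Set.Icc (0:ℝ) 1) := uniqueDiffOn_Icc zero_lt_one
    have key : ∀ z ∈ Set.Icc (0:ℝ) 1,
        ‖iteratedDerivWithin (n + 1) (f ∘ U h) (Set.Icc 0 1) z‖ ≤
          (n + 1).factorial * Mx * (C * h) ^ (n + 1) := by
      intro z hz
      rw [← norm_iteratedFDerivWithin_eq_norm_iteratedDerivWithin]
      refine norm_iteratedFDerivWithin_comp_le (N := ((⊤ : ℕ∞) : WithTop ℕ∞)) (t := Set.univ)
        hf.contDiffOn h2.contDiffOn
        (by exact_mod_cast le_top) uniqueDiffOn_univ hud (Set.mapsTo_univ _ _) hz ?_ ?_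
      · intro i hi
        rw [iteratedFDerivWithin_univ]
        refine (hM i _ (h1 z hz)).trans ((le_abs_self _).trans ?_)
        exact Finset.single_le_sum (f := fun i => |M i|) (fun _ _ => abs_nonneg _)
          (Finset.mem_range.2 (by omega))
      · intro i hi1 hi2
        rw [norm_iteratedFDerivWithin_eq_norm_iteratedDerivWithin]
        exact h3 z hz i hi1 hi2
    refine ⟨fun i => ((i.factorial : ℝ)⁻¹) • iteratedDerivWithin i (f ∘ U h) (Set.Icc 0 1) 0,
      fun x hx => ?_⟩
    have ht := taylor_mean_remainder_bound (f := f ∘ U h) (a := 0) (b := 1) (n := n) zero_le_one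
      ((hf.comp h2).contDiffOn.of_le (by exact_mod_cast le_top)) hx key
    have e : taylorWithinEval (f ∘ U h) n (Set.Icc 0 1) 0 x = vpoly (n + 1)
        (fun i => ((i.factorial : ℝ)⁻¹) • iteratedDerivWithin i (f ∘ U h) (Set.Icc 0 1) 0) x := by
      rw [taylor_within_apply]
      unfold vpoly
      refine Finset.sum_congr rfl fun i _ => ?_
      rw [smul_smul, sub_zero, mul_comm]
    rw [e] at ht
    refine ht.trans ?_
    rw [sub_zero, mul_pow]
    have hx1 : x ^ (n + 1) ≤ 1 := pow_le_one₀ hx.1 hx.2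
    have hx0 : 0 ≤ x ^ (n + 1) := pow_nonneg hx.1 _
    have hf1 : (1:ℝ) ≤ n.factorial := by exact_mod_cast Nat.factorial_pos n
    have hA : 0 ≤ (n + 1).factorial * Mx * (C ^ (n + 1) * h ^ (n + 1)) := by positivity
    rw [div_le_iff₀ (by positivity)]
    calc _ ≤ (n + 1).factorial * Mx * (C ^ (n + 1) * h ^ (n + 1)) * 1 := by gcongr
      _ ≤ (n + 1).factorial * Mx * (C ^ (n + 1) * h ^ (n + 1)) * n.factorial := by gcongr
      _ = _ := by ring

lemma gam_O {k s : ℕ} (hk : s ≤ k) (c b : Fin k → ℝ) (hc : ∀ ℓ, c ℓ ∈ Set.Icc (0:ℝ) 1)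
    (hquad : ∀ q : Polynomial ℝ, q.natDegree ≤ 2 * k - 1 →
      ∑ ℓ, b ℓ * q.eval (c ℓ) = ∫ x in (0:ℝ)..1, q.eval x)
    (f : E → E) (hf : ContDiff ℝ (⊤ : ℕ∞) f) (K : Set E) (hK : IsCompact K)
    (U : ℝ → ℝ → E) (hUK : ∀ᶠ h in 𝓝[>] (0:ℝ), ∀ x ∈ Set.Icc (0:ℝ) 1, U h x ∈ K)
    (hUc : ∀ᶠ h in 𝓝[>] (0:ℝ), ContDiff ℝ (⊤ : ℕ∞) (U h))
    (n j : ℕ) (hnj : n ≤ j) (hjs : j < s) (hB : BD U n) :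
    ∃ C, 0 ≤ C ∧ ∀ᶠ h in 𝓝[>] (0:ℝ), ‖gam c b (fun z => f (U h z)) j‖ ≤ C * h ^ n := by
  obtain ⟨C, hC0, hC⟩ := approx_of_BD f hf K hK U hUK hUc n hB
  refine ⟨(∑ ℓ, |b ℓ * legP j (c ℓ)|) * C,
    mul_nonneg (Finset.sum_nonneg fun _ _ => abs_nonneg _) hC0, ?_⟩
  filter_upwards [hC] with h ⟨a, ha⟩
  have := gam_bound c b hc hquad j n hnj (by omega) a (fun z => f (U h z)) _ ha
  rwa [← mul_assoc] at this

lemma BD_all {k s : ℕ} (hk : s ≤ k) (c b : Fin k → ℝ) (hc : ∀ ℓ, c ℓ ∈ Set.Icc (0:ℝ) 1)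
    (hquad : ∀ q : Polynomial ℝ, q.natDegree ≤ 2 * k - 1 →
      ∑ ℓ, b ℓ * q.eval (c ℓ) = ∫ x in (0:ℝ)..1, q.eval x)
    (f : E → E) (hf : ContDiff ℝ (⊤ : ℕ∞) f) (K : Set E) (hK : IsCompact K)
    (U : ℝ → ℝ → E) (hUK : ∀ᶠ h in 𝓝[>] (0:ℝ), ∀ x ∈ Set.Icc (0:ℝ) 1, U h x ∈ K)
    (hUc : ∀ᶠ h in 𝓝[>] (0:ℝ), ContDiff ℝ (⊤ : ℕ∞) (U h))
    (η : ℕ → ℝ → ℝ)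
    (hη : ∀ j < s, ∃ C, 0 ≤ C ∧ ∀ᶠ h in 𝓝[>] (0:ℝ), |1 - η j h| ≤ C * h ^ (2 * (s - j)))
    (hUd : ∀ᶠ h in 𝓝[>] (0:ℝ), ∀ x ∈ Set.Icc (0:ℝ) 1, HasDerivAt (U h)
      (h • ∑ j ∈ Finset.range s, legP j x • (η j h • gam c b (fun z => f (U h z)) j)) x)
    (n : ℕ) : BD U n := by
  induction n with
  | zero => exact ⟨0, le_rfl, Eventually.of_forall fun h x _ i h1 h2 => by omega⟩
  | succ n ih =>
    have hstep : ∃ D, 0 ≤ D ∧ ∀ᶠ h in 𝓝[>] (0:ℝ), ∀ x ∈ Set.Icc (0:ℝ) 1,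
        ‖iteratedDerivWithin (n + 1) (U h) (Set.Icc 0 1) x‖ ≤ D * h ^ (n + 1) := by
      have hterm : ∀ j ∈ Finset.range s, ∃ D, 0 ≤ D ∧ ∀ᶠ h in 𝓝[>] (0:ℝ),
          ∀ x ∈ Set.Icc (0:ℝ) 1, ‖(derivative^[n] (legPoly j)).eval x •
            (h • (η j h • gam c b (fun z => f (U h z)) j))‖ ≤ D * h ^ (n + 1) := by
        intro j hj
        rw [Finset.mem_range] at hj
        rcases lt_or_ge j n with hjn | hjn
        · refine ⟨0, le_rfl, Eventually.of_forall fun h x _ => ?_⟩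
          rw [iterate_derivative_eq_zero ((legPoly_natDegree_le j).trans_lt hjn)]
          simp
        · obtain ⟨C, hC0, hC⟩ := gam_O hk c b hc hquad f hf K hK U hUK hUc n j hjn hj ih
          obtain ⟨M, hM0, hM⟩ := poly_bdd (derivative^[n] (legPoly j))
          obtain ⟨A, hA0, hA⟩ := hη j hj
          refine ⟨M * ((1 + A) * C), by positivity, ?_⟩
          filter_upwards [hC, hA, ev_pos, ev_le_one] with h h1 h2 h3 h4 x hx
          rw [norm_smul, norm_smul, norm_smul, Real.norm_eq_abs, Real.norm_eq_abs,
            Real.norm_eq_abs, abs_of_pos h3]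
          have h5 : |η j h| ≤ 1 + A := by
            have : h ^ (2 * (s - j)) ≤ 1 := pow_le_one₀ h3.le h4
            have h6 : |1 - η j h| ≤ A := h2.trans (mul_le_of_le_one_right hA0 this)
            rw [abs_le] at h6 ⊢
            constructor <;> linarith
          calc _ ≤ M * (h * ((1 + A) * (C * h ^ n))) := by
                have := hM x hx
                gcongr
            _ = _ := by ring
      choose! D hD0 hD using hterm
      refine ⟨∑ j ∈ Finset.range s, D j, Finset.sum_nonneg hD0, ?_⟩
      have hD' : ∀ᶠ h in 𝓝[>] (0:ℝ), ∀ j ∈ Finset.range s, ∀ x ∈ Set.Icc (0:ℝ) 1,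
          ‖(derivative^[n] (legPoly j)).eval x •
            (h • (η j h • gam c b (fun z => f (U h z)) j))‖ ≤ D j * h ^ (n + 1) :=
        (Finset.eventually_all (Finset.range s)).2 hD
      filter_upwards [hD', hUd] with h h1 h2 x hx
      rw [iteratedDerivWithin_succ']
      have : Set.EqOn (derivWithin (U h) (Set.Icc 0 1))
          (fun x => ∑ j ∈ Finset.range s, (legPoly j).eval x •
            (h • (η j h • gam c b (fun z => f (U h z)) j))) (Set.Icc 0 1) := by
        intro z hz
        have hd := (h2 z hz).hasDerivWithinAt (s := Set.Icc 0 1)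
        rw [hd.derivWithin (uniqueDiffOn_Icc zero_lt_one z hz), Finset.smul_sum]
        refine Finset.sum_congr rfl fun j _ => ?_
        rw [smul_comm, legP_eq]
      rw [iteratedDerivWithin_congr this hx, iterDeriv_poly _ _ _ _ _ hx]
      refine (norm_sum_le _ _).trans ?_
      rw [Finset.sum_mul]
      exact Finset.sum_le_sum fun j hj => h1 j hj x hx
    obtain ⟨C, hC0, hC⟩ := ih
    obtain ⟨D, hD0, hD⟩ := hstep
    refine ⟨C + D + 1, by positivity, ?_⟩
    filter_upwards [hC, hD, ev_pos] with h h1 h2 h3 x hx i hi1 hi2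
    rcases Nat.lt_or_ge i (n + 1) with hi | hi
    · refine (h1 x hx i hi1 (by omega)).trans ?_
      gcongr
      linarith
    · obtain rfl : i = n + 1 := by omega
      refine (h2 x hx).trans ?_
      rw [mul_pow]
      gcongr
      calc D ≤ C + D + 1 := by linarith
        _ ≤ (C + D + 1) ^ (n + 1) := le_self_pow₀ (by linarith) (by omega)

lemma corr_term {k s : ℕ} (hk : s ≤ k) (c b : Fin k → ℝ) (hc : ∀ ℓ, c ℓ ∈ Set.Icc (0:ℝ) 1)
    (hquad : ∀ q : Polynomial ℝ, q.natDegree ≤ 2 * k - 1 →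
      ∑ ℓ, b ℓ * q.eval (c ℓ) = ∫ x in (0:ℝ)..1, q.eval x)
    (f : E → E) (hf : ContDiff ℝ (⊤ : ℕ∞) f) (K : Set E) (hK : IsCompact K)
    (U : ℝ → ℝ → E) (hUK : ∀ᶠ h in 𝓝[>] (0:ℝ), ∀ x ∈ Set.Icc (0:ℝ) 1, U h x ∈ K)
    (hUc : ∀ᶠ h in 𝓝[>] (0:ℝ), ContDiff ℝ (⊤ : ℕ∞) (U h))
    (η : ℕ → ℝ → ℝ)
    (hη : ∀ j < s, ∃ C, 0 ≤ C ∧ ∀ᶠ h in 𝓝[>] (0:ℝ), |1 - η j h| ≤ C * h ^ (2 * (s - j)))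
    (hUd : ∀ᶠ h in 𝓝[>] (0:ℝ), ∀ x ∈ Set.Icc (0:ℝ) 1, HasDerivAt (U h)
      (h • ∑ j ∈ Finset.range s, legP j x • (η j h • gam c b (fun z => f (U h z)) j)) x)
    (j : ℕ) (hj : j < s) : ∃ C, 0 ≤ C ∧ ∀ᶠ h in 𝓝[>] (0:ℝ),
    ‖(1 - η j h) • gam c b (fun z => f (U h z)) j‖ ≤ C * h ^ (2 * s - j) := by
  obtain ⟨A, hA0, hA⟩ := hη j hj
  obtain ⟨C, hC0, hC⟩ := gam_O hk c b hc hquad f hf K hK U hUK hUc j j le_rfl hj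
    (BD_all hk c b hc hquad f hf K hK U hUK hUc η hη hUd j)
  refine ⟨A * C, by positivity, ?_⟩
  filter_upwards [hA, hC, ev_pos] with h h1 h2 h3
  rw [norm_smul, Real.norm_eq_abs]
  calc _ ≤ (A * h ^ (2 * (s - j))) * (C * h ^ j) := by gcongr
    _ = A * C * h ^ (2 * (s - j) + j) := by rw [pow_add]; ring
    _ = _ := by congr 2; omega

/-- defect -/
noncomputable def dfct (s : ℕ) {k : ℕ} (c b : Fin k → ℝ) (f : E → E) (U : ℝ → ℝ → E)
    (η : ℕ → ℝ → ℝ) (h x : ℝ) : E :=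
  ∑ j ∈ Finset.range s, legP j x • (η j h • gam c b (fun z => f (U h z)) j) - f (U h x)

lemma dfct_eq {k s : ℕ} (c b : Fin k → ℝ) (f : E → E) (U : ℝ → ℝ → E) (η : ℕ → ℝ → ℝ)
    (h x : ℝ) : dfct s c b f U η h x =
    (∑ j ∈ Finset.range s, legP j x • gam c b (fun z => f (U h z)) j - f (U h x)) -
      ∑ j ∈ Finset.range s, legP j x • ((1 - η j h) • gam c b (fun z => f (U h z)) j) := by
  simp only [dfct, sub_smul, smul_sub, one_smul, Finset.sum_sub_distrib]
  abel

lemma dfct_O {k s : ℕ} (hk : s ≤ k) (c b : Fin k → ℝ) (hc : ∀ ℓ, c ℓ ∈ Set.Icc (0:ℝ) 1)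
    (hquad : ∀ q : Polynomial ℝ, q.natDegree ≤ 2 * k - 1 →
      ∑ ℓ, b ℓ * q.eval (c ℓ) = ∫ x in (0:ℝ)..1, q.eval x)
    (f : E → E) (hf : ContDiff ℝ (⊤ : ℕ∞) f) (K : Set E) (hK : IsCompact K)
    (U : ℝ → ℝ → E) (hUK : ∀ᶠ h in 𝓝[>] (0:ℝ), ∀ x ∈ Set.Icc (0:ℝ) 1, U h x ∈ K)
    (hUc : ∀ᶠ h in 𝓝[>] (0:ℝ), ContDiff ℝ (⊤ : ℕ∞) (U h))
    (η : ℕ → ℝ → ℝ)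
    (hη : ∀ j < s, ∃ C, 0 ≤ C ∧ ∀ᶠ h in 𝓝[>] (0:ℝ), |1 - η j h| ≤ C * h ^ (2 * (s - j)))
    (hUd : ∀ᶠ h in 𝓝[>] (0:ℝ), ∀ x ∈ Set.Icc (0:ℝ) 1, HasDerivAt (U h)
      (h • ∑ j ∈ Finset.range s, legP j x • (η j h • gam c b (fun z => f (U h z)) j)) x) : ∃ C, 0 ≤ C ∧ ∀ᶠ h in 𝓝[>] (0:ℝ), ∀ x ∈ Set.Icc (0:ℝ) 1,
    ‖dfct s c b f U η h x‖ ≤ C * h ^ s := by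
  have hB := BD_all hk c b hc hquad f hf K hK U hUK hUc η hη hUd
  obtain ⟨C₁, hC₁0, hC₁⟩ := defect_bound (E := E) hk c b hc hquad
  obtain ⟨C₂, hC₂0, hC₂⟩ := approx_of_BD f hf K hK U hUK hUc s (hB s)
  have hcorr := corr_term hk c b hc hquad f hf K hK U hUK hUc η hη hUd
  choose! D hD0 hD using hcorr
  choose P hP0 hP using legP_bdd
  have hD' : ∀ᶠ h in 𝓝[>] (0:ℝ), ∀ j ∈ Finset.range s,
      ‖(1 - η j h) • gam c b (fun z => f (U h z)) j‖ ≤ D j * h ^ (2 * s - j) :=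
    (Finset.eventually_all (Finset.range s)).2 fun j hj => hD j (Finset.mem_range.1 hj)
  refine ⟨C₁ * C₂ + ∑ j ∈ Finset.range s, P j * D j, ?_, ?_⟩
  · have : 0 ≤ ∑ j ∈ Finset.range s, P j * D j := Finset.sum_nonneg fun j hj =>
      mul_nonneg (hP0 j) (hD0 j (Finset.mem_range.1 hj))
    positivity
  filter_upwards [hC₂, hD', ev_pos, ev_le_one] with h ⟨a, ha⟩ h2 h3 h4 x hx
  rw [dfct_eq]
  refine (norm_sub_le _ _).trans ?_
  rw [add_mul]
  refine add_le_add ?_ ?_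
  · have := hC₁ a (fun z => f (U h z)) _ ha x hx
    rwa [← mul_assoc] at this
  · refine (norm_sum_le _ _).trans ?_
    rw [Finset.sum_mul]
    refine Finset.sum_le_sum fun j hj => ?_
    have hjs := Finset.mem_range.1 hj
    rw [norm_smul, Real.norm_eq_abs, mul_assoc]
    refine mul_le_mul (hP j x hx) ((h2 j hj).trans ?_) (norm_nonneg _) (hP0 j)
    exact mul_le_mul_of_nonneg_left (pow_le_pow_of_le_one h3.le h4 (by omega)) (hD0 j hjs)

lemma moment_O {k s : ℕ} (hk : s ≤ k) (c b : Fin k → ℝ) (hc : ∀ ℓ, c ℓ ∈ Set.Icc (0:ℝ) 1)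
    (hquad : ∀ q : Polynomial ℝ, q.natDegree ≤ 2 * k - 1 →
      ∑ ℓ, b ℓ * q.eval (c ℓ) = ∫ x in (0:ℝ)..1, q.eval x)
    (f : E → E) (hf : ContDiff ℝ (⊤ : ℕ∞) f) (K : Set E) (hK : IsCompact K)
    (U : ℝ → ℝ → E) (hUK : ∀ᶠ h in 𝓝[>] (0:ℝ), ∀ x ∈ Set.Icc (0:ℝ) 1, U h x ∈ K)
    (hUc : ∀ᶠ h in 𝓝[>] (0:ℝ), ContDiff ℝ (⊤ : ℕ∞) (U h))
    (η : ℕ → ℝ → ℝ)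
    (hη : ∀ j < s, ∃ C, 0 ≤ C ∧ ∀ᶠ h in 𝓝[>] (0:ℝ), |1 - η j h| ≤ C * h ^ (2 * (s - j)))
    (hUd : ∀ᶠ h in 𝓝[>] (0:ℝ), ∀ x ∈ Set.Icc (0:ℝ) 1, HasDerivAt (U h)
      (h • ∑ j ∈ Finset.range s, legP j x • (η j h • gam c b (fun z => f (U h z)) j)) x)
    [CompleteSpace E] (i : ℕ) (hi : i < s) : ∃ C, 0 ≤ C ∧ ∀ᶠ h in 𝓝[>] (0:ℝ),
    ‖∫ x in (0:ℝ)..1, x ^ i • dfct s c b f U η h x‖ ≤ C * h ^ (2 * s - i) := by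
  have hB := BD_all hk c b hc hquad f hf K hK U hUK hUc η hη hUd
  obtain ⟨C₂, hC₂0, hC₂⟩ := approx_of_BD f hf K hK U hUK hUc (2 * s - i) (hB _)
  have hcorr := corr_term hk c b hc hquad f hf K hK U hUK hUc η hη hUd
  choose! D hD0 hD using hcorr
  have hD' : ∀ᶠ h in 𝓝[>] (0:ℝ), ∀ j ∈ Finset.range s,
      ‖(1 - η j h) • gam c b (fun z => f (U h z)) j‖ ≤ D j * h ^ (2 * s - j) :=
    (Finset.eventually_all (Finset.range s)).2 fun j hj => hD j (Finset.mem_range.1 hj)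
  have hbs : 0 ≤ ∑ ℓ, |b ℓ| := Finset.sum_nonneg fun _ _ => abs_nonneg _
  refine ⟨(∑ ℓ, |b ℓ| + 1) * C₂ +
    ∑ j ∈ Finset.range s, |∫ x in (0:ℝ)..1, legP j x * x ^ i| * D j, ?_, ?_⟩
  · have : 0 ≤ ∑ j ∈ Finset.range s, |∫ x in (0:ℝ)..1, legP j x * x ^ i| * D j :=
      Finset.sum_nonneg fun j hj => mul_nonneg (abs_nonneg _) (hD0 j (Finset.mem_range.1 hj))
    positivity
  filter_upwards [hC₂, hD', ev_pos, ev_le_one, hUc] with h ⟨a, ha⟩ h2 h3 h4 h5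
  have hGc : Continuous (fun z => f (U h z)) := hf.continuous.comp h5.continuous
  have hlc := legP_continuous
  simp only [dfct_eq, smul_sub (M := ℝ) (A := E) _ (_ - _)]
  rw [intervalIntegral.integral_sub (Continuous.intervalIntegrable (by fun_prop) _ _)
    (Continuous.intervalIntegrable (by fun_prop) _ _)]
  refine (norm_sub_le _ _).trans ?_
  rw [add_mul]
  refine add_le_add ?_ ?_
  · have := moment_bound hk c b hc hquad i hi a (fun z => f (U h z)) hGc _ ha
    rwa [← mul_assoc] at this
  · have e : ∀ x : ℝ, x ^ i • ∑ j ∈ Finset.range s,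
        legP j x • ((1 - η j h) • gam c b (fun z => f (U h z)) j) =
        ∑ j ∈ Finset.range s, (legP j x * x ^ i) •
          ((1 - η j h) • gam c b (fun z => f (U h z)) j) := by
      intro x
      rw [Finset.smul_sum]
      refine Finset.sum_congr rfl fun j _ => ?_
      rw [smul_smul (x ^ i), mul_comm]
    simp only [e]
    rw [intervalIntegral.integral_finsetSum fun j _ =>
      Continuous.intervalIntegrable (by fun_prop) _ _]
    simp only [intervalIntegral.integral_smul_const]
    refine (norm_sum_le _ _).trans ?_
    rw [Finset.sum_mul]
    refine Finset.sum_le_sum fun j hj => ?_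
    have hjs := Finset.mem_range.1 hj
    rw [norm_smul, Real.norm_eq_abs, mul_assoc]
    rcases lt_or_ge i j with hij | hij
    · have := leg_orth j (X ^ i) (by simpa using hij)
      simp only [eval_pow, eval_X] at this
      rw [this]; simp
    · refine mul_le_mul_of_nonneg_left ((h2 j hj).trans ?_) (abs_nonneg _)
      exact mul_le_mul_of_nonneg_left (pow_le_pow_of_le_one h3.le h4 (by omega)) (hD0 j hjs)

end bootstrap

section final

open Filter Topology

variable {E : Type*} [NormedAddCommGroup E] [NormedSpace ℝ E]

lemma exists_Z [CompleteSpace E] (f : E → E) (hf : ContDiff ℝ (⊤ : ℕ∞) f) (y₀ : E) :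
    ∃ ε > (0:ℝ), ∃ (y : ℝ → E) (Z : ℝ → E →L[ℝ] E), y 0 = y₀ ∧ Z 0 = 1 ∧
      (∀ t ∈ Set.Icc 0 ε, HasDerivAt y (f (y t)) t) ∧
      (∀ t ∈ Set.Icc 0 ε, HasDerivAt Z (-((Z t).comp (fderiv ℝ f (y t)))) t) ∧
      ∀ n : ℕ, ∃ (B : ℕ → E →L[ℝ] E) (C : ℝ), 0 ≤ C ∧
        ∀ t ∈ Set.Icc 0 ε, ‖Z t - vpoly (n + 1) B t‖ ≤ C * t ^ (n + 1) := by
  set F : E × (E →L[ℝ] E) → E × (E →L[ℝ] E) :=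
    fun p => (f p.1, -(p.2.comp (fderiv ℝ f p.1))) with hF
  have hdf : ContDiff ℝ (⊤ : ℕ∞) (fderiv ℝ f) := hf.fderiv_right (by norm_cast)
  have hFs : ContDiff ℝ (⊤ : ℕ∞) F := by
    refine (hf.comp contDiff_fst).prodMk ?_
    exact (contDiff_snd.clm_comp (hdf.comp contDiff_fst)).neg
  obtain ⟨α, hα0, ε, hε, hα⟩ :=
    ContDiffAt.exists_forall_mem_closedBall_exists_eq_forall_mem_Ioo_hasDerivAt₀
    (f := F) (x₀ := (y₀, 1)) ((hFs.of_le (by norm_cast)).contDiffAt) 0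
  have hsub : ∀ t ∈ Set.Icc 0 (ε / 2), t ∈ Set.Ioo (0 - ε) (0 + ε) := fun t ht =>
    ⟨by linarith [ht.1], by linarith [ht.2]⟩
  have hs : ContDiffOn ℝ (⊤ : ℕ∞) α (Set.Icc 0 (ε / 2)) :=
    ODE.contDiffOn_enat_Icc_of_hasDerivWithinAt (f := fun _ => F) (u := Set.univ)
      (hFs.comp contDiff_snd).contDiffOn (fun t ht => (hα t (hsub t ht)).hasDerivWithinAt)
      (Set.mapsTo_univ _ _)
  have hZs : ContDiffOn ℝ (⊤ : ℕ∞) (fun t => (α t).2) (Set.Icc 0 (ε / 2)) :=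
    contDiff_snd.comp_contDiffOn hs
  refine ⟨ε / 2, by positivity, fun t => (α t).1, fun t => (α t).2, by simp [hα0],
    by simp [hα0], ?_, ?_, ?_⟩
  · intro t ht
    exact (hα t (hsub t ht)).fst
  · intro t ht
    exact (hα t (hsub t ht)).snd
  · intro n
    obtain ⟨C, hC⟩ := exists_taylor_mean_remainder_bound (f := fun t => (α t).2) (n := n)
      (a := 0) (b := ε / 2) (by positivity) (hZs.of_le (by exact_mod_cast le_top))
    refine ⟨fun i => ((i.factorial : ℝ)⁻¹) •
      iteratedDerivWithin i (fun t => (α t).2) (Set.Icc 0 (ε / 2)) 0, max C 0, le_max_right _ _,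
      fun t ht => ?_⟩
    have h1 := hC t ht
    rw [taylor_within_apply] at h1
    have e : vpoly (n + 1) (fun i => ((i.factorial : ℝ)⁻¹) •
      iteratedDerivWithin i (fun t => (α t).2) (Set.Icc 0 (ε / 2)) 0) t =
      ∑ i ∈ Finset.range (n + 1), ((i.factorial : ℝ)⁻¹ * (t - 0) ^ i) •
        iteratedDerivWithin i (fun t => (α t).2) (Set.Icc 0 (ε / 2)) 0 := by
      unfold vpoly
      refine Finset.sum_congr rfl fun i _ => ?_
      rw [smul_smul, sub_zero, mul_comm]
    rw [e]
    refine h1.trans ?_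
    rw [sub_zero]
    exact mul_le_mul_of_nonneg_right (le_max_left _ _) (pow_nonneg ht.1 _)

lemma lip_ball [FiniteDimensional ℝ E] {F : Type*} [NormedAddCommGroup F] [NormedSpace ℝ F]
    (f : E → F) (hf : ContDiff ℝ (⊤ : ℕ∞) f) (R : ℝ) :
    ∃ L, 0 ≤ L ∧ ∀ u ∈ Metric.closedBall (0:E) R, ∀ v ∈ Metric.closedBall (0:E) R,
      ‖f u - f v‖ ≤ L * ‖u - v‖ := by
  have : ProperSpace E := FiniteDimensional.proper ℝ E
  obtain ⟨M, hM⟩ := (isCompact_closedBall (0:E) R).exists_bound_of_continuousOn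
    (hf.continuous_fderiv (by simp)).continuousOn
  refine ⟨max M 0, le_max_right _ _, fun u hu v hv => ?_⟩
  exact (convex_closedBall (0:E) R).norm_image_sub_le_of_norm_fderiv_le (𝕜 := ℝ)
    (fun x _ => (hf.differentiable (by simp)).differentiableAt)
    (fun x hx => (hM x hx).trans (le_max_left _ _)) hv hu

lemma quad_ball [FiniteDimensional ℝ E] (f : E → E) (hf : ContDiff ℝ (⊤ : ℕ∞) f) (R : ℝ) :
    ∃ L, 0 ≤ L ∧ ∀ u ∈ Metric.closedBall (0:E) R, ∀ v ∈ Metric.closedBall (0:E) R,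
      ‖f u - f v - fderiv ℝ f v (u - v)‖ ≤ L * ‖u - v‖ ^ 2 := by
  have hdf : ContDiff ℝ (⊤ : ℕ∞) (fderiv ℝ f) := hf.fderiv_right (by norm_cast)
  obtain ⟨L, hL0, hL⟩ := lip_ball (fderiv ℝ f) hdf R
  refine ⟨L, hL0, fun u hu v hv => ?_⟩
  have hseg : segment ℝ v u ⊆ Metric.closedBall (0:E) R :=
    (convex_closedBall (0:E) R).segment_subset hv hu
  have := (convex_segment v u).norm_image_sub_le_of_norm_fderiv_le' (𝕜 := ℝ) (f := f)
    (φ := fderiv ℝ f v) (C := L * ‖u - v‖)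
    (fun x _ => (hf.differentiable (by simp)).differentiableAt)
    (fun x hx => (hL x (hseg hx) v hv).trans
      (mul_le_mul_of_nonneg_left (by
        obtain ⟨a, b, ha, hb, hab, rfl⟩ := hx
        have : a • v + b • u - v = b • (u - v) := by
          have : a = 1 - b := by linarith
          rw [this]; module
        rw [this, norm_smul, Real.norm_eq_abs, abs_of_nonneg hb]
        exact mul_le_of_le_one_left (norm_nonneg _) (by linarith)) hL0))
    (left_mem_segment ℝ v u) (right_mem_segment ℝ v u)
  rwa [mul_assoc, ← sq] at this

/-- Gronwall on `[0,1]`. -/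
lemma gron (L : ℝ) (hL : 0 ≤ L) : ∃ G, 0 ≤ G ∧ ∀ (e e' : ℝ → E) (ε : ℝ), 0 ≤ ε →
    (∀ x ∈ Set.Icc (0:ℝ) 1, HasDerivAt e (e' x) x) → e 0 = 0 →
    (∀ x ∈ Set.Icc (0:ℝ) 1, ‖e' x‖ ≤ L * ‖e x‖ + ε) →
    ∀ x ∈ Set.Icc (0:ℝ) 1, ‖e x‖ ≤ G * ε := by
  have hL1 : (0:ℝ) < L + 1 := by positivity
  refine ⟨(Real.exp (L + 1) - 1) / (L + 1), ?_, ?_⟩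
  · have : 1 ≤ Real.exp (L + 1) := Real.one_le_exp hL1.le
    exact div_nonneg (by linarith) hL1.le
  · intro e e' ε hε hd h0 hb x hx
    have h1 := norm_le_gronwallBound_of_norm_deriv_right_le (f := e) (f' := e') (δ := 0)
      (K := L + 1) (ε := ε) (a := 0) (b := 1)
      (fun z hz => (hd z hz).continuousAt.continuousWithinAt)
      (fun z hz => (hd z ⟨hz.1, hz.2.le⟩).hasDerivWithinAt) (by simp [h0])
      (fun z hz => (hb z ⟨hz.1, hz.2.le⟩).trans (by
        have := norm_nonneg (e z); nlinarith)) x hx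
    refine h1.trans ((gronwallBound_mono le_rfl hε hL1.le (b := 1)
      (by linarith [hx.2])).trans ?_)
    rw [gronwallBound_of_K_ne_0 hL1.ne']
    simp only [mul_one, zero_mul, zero_add]
    rw [div_mul_eq_mul_div, div_mul_eq_mul_div, mul_comm]

set_option maxHeartbeats 1000000 in
lemma final_bound [FiniteDimensional ℝ E] {k s : ℕ} (hs : 1 ≤ s)
    (hk : s ≤ k) (c b : Fin k → ℝ) (hc : ∀ ℓ, c ℓ ∈ Set.Icc (0:ℝ) 1)
    (hquad : ∀ q : Polynomial ℝ, q.natDegree ≤ 2 * k - 1 →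
      ∑ ℓ, b ℓ * q.eval (c ℓ) = ∫ x in (0:ℝ)..1, q.eval x)
    (f : E → E) (hf : ContDiff ℝ (⊤ : ℕ∞) f) (K : Set E) (hK : IsCompact K)
    (U : ℝ → ℝ → E) (hUK : ∀ᶠ h in 𝓝[>] (0:ℝ), ∀ x ∈ Set.Icc (0:ℝ) 1, U h x ∈ K)
    (hUc : ∀ᶠ h in 𝓝[>] (0:ℝ), ContDiff ℝ (⊤ : ℕ∞) (U h))
    (η : ℕ → ℝ → ℝ)
    (hη : ∀ j < s, ∃ C, 0 ≤ C ∧ ∀ᶠ h in 𝓝[>] (0:ℝ), |1 - η j h| ≤ C * h ^ (2 * (s - j)))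
    (hUd : ∀ᶠ h in 𝓝[>] (0:ℝ), ∀ x ∈ Set.Icc (0:ℝ) 1, HasDerivAt (U h)
      (h • ∑ j ∈ Finset.range s, legP j x • (η j h • gam c b (fun z => f (U h z)) j)) x)
    (y : ℝ → E) (Z : ℝ → E →L[ℝ] E) (ε : ℝ) (hε : 0 < ε) (hZ0 : Z 0 = 1)
    (hU0 : ∀ᶠ h in 𝓝[>] (0:ℝ), U h 0 = y 0)
    (hy : ∀ t ∈ Set.Icc 0 ε, HasDerivAt y (f (y t)) t)
    (hZ : ∀ t ∈ Set.Icc 0 ε, HasDerivAt Z (-((Z t).comp (fderiv ℝ f (y t)))) t)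
    (hZt : ∃ (B : ℕ → E →L[ℝ] E) (C : ℝ), 0 ≤ C ∧
        ∀ t ∈ Set.Icc 0 ε, ‖Z t - vpoly s B t‖ ≤ C * t ^ s) :
    ∃ C, 0 ≤ C ∧ ∀ᶠ h in 𝓝[>] (0:ℝ), ‖U h 1 - y h‖ ≤ C * h ^ (2 * s + 1) := by
  have : CompleteSpace E := FiniteDimensional.complete ℝ E
  obtain ⟨Cd, hCd0, hCd⟩ := dfct_O hk c b hc hquad f hf K hK U hUK hUc η hη hUd
  have hmom := moment_O hk c b hc hquad f hf K hK U hUK hUc η hη hUd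
  choose! Cm hCm0 hCm using hmom
  have hCm' : ∀ᶠ h in 𝓝[>] (0:ℝ), ∀ i ∈ Finset.range s,
      ‖∫ x in (0:ℝ)..1, x ^ i • dfct s c b f U η h x‖ ≤ Cm i * h ^ (2 * s - i) :=
    (Finset.eventually_all (Finset.range s)).2 fun j hj => hCm j (Finset.mem_range.1 hj)
  obtain ⟨B, CB, hCB0, hCB⟩ := hZt
  -- a ball containing everything
  have hyc : ContinuousOn y (Set.Icc 0 ε) := fun t ht => (hy t ht).continuousAt.continuousWithinAt
  have hZc : ContinuousOn Z (Set.Icc 0 ε) := fun t ht => (hZ t ht).continuousAt.continuousWithinAt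
  obtain ⟨R₁, hR₁⟩ := isCompact_Icc.exists_bound_of_continuousOn hyc
  obtain ⟨R₂, hR₂⟩ := hK.exists_bound_of_continuousOn (f := id) continuousOn_id
  obtain ⟨MZ, hMZ⟩ := isCompact_Icc.exists_bound_of_continuousOn hZc
  have hMZ0 : 0 ≤ MZ := (norm_nonneg _).trans (hMZ 0 ⟨le_rfl, hε.le⟩)
  set R := max R₁ R₂
  obtain ⟨L, hL0, hL⟩ := lip_ball f hf R
  obtain ⟨L₂, hL₂0, hL₂⟩ := quad_ball f hf R
  obtain ⟨G, hG0, hG⟩ := gron (E := E) L hL0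
  have hZh : ∀ᶠ h in 𝓝[>] (0:ℝ), ‖1 - Z h‖ ≤ 1 / 2 := by
    have h1 : Tendsto Z (𝓝 0) (𝓝 1) := by
      have := (hZ 0 ⟨le_rfl, hε.le⟩).continuousAt.tendsto
      rwa [hZ0] at this
    have h2 : Tendsto (fun h => ‖1 - Z h‖) (𝓝 0) (𝓝 0) := by
      have := (tendsto_const_nhds (x := (1 : E →L[ℝ] E))).sub h1
      simpa using this.norm
    exact eventually_nhdsWithin_of_eventually_nhds
      (h2.eventually (eventually_le_nhds (by norm_num)))
  have hevε : ∀ᶠ h in 𝓝[>] (0:ℝ), h ≤ ε :=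
    eventually_nhdsWithin_of_eventually_nhds (eventually_le_nhds hε)
  set C₁ := MZ * (L₂ * (G * Cd) ^ 2) + CB * Cd with hC₁
  set C₂ := ∑ i ∈ Finset.range s, ‖B i‖ * Cm i with hC₂
  have hC₂0 : 0 ≤ C₂ := Finset.sum_nonneg fun i hi =>
    mul_nonneg (norm_nonneg _) (hCm0 i (Finset.mem_range.1 hi))
  refine ⟨2 * (C₁ + C₂), by positivity, ?_⟩
  filter_upwards [hCd, hCm', hZh, hevε, ev_pos, ev_le_one, hUK, hUc, hUd, hU0] with
    h hδ hm hzh hhε hpos hle1 hUKh hUch hUdh hU0h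
  have hxh : ∀ x ∈ Set.Icc (0:ℝ) 1, x * h ∈ Set.Icc 0 ε := fun x hx =>
    ⟨mul_nonneg hx.1 hpos.le, (mul_le_of_le_one_left hpos.le hx.2).trans hhε⟩
  set δ := dfct s c b f U η h with hδdef
  have hδc : Continuous δ := by
    have hlc := legP_continuous
    have hGc : Continuous (fun z => f (U h z)) := hf.continuous.comp hUch.continuous
    have : δ = fun x => ∑ j ∈ Finset.range s,
      legP j x • (η j h • gam c b (fun z => f (U h z)) j) - f (U h x) := rfl
    rw [this]
    fun_prop
  set e : ℝ → E := fun x => U h x - y (x * h) with he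
  have hmulh : ∀ x : ℝ, HasDerivAt (fun x : ℝ => x * h) h x := fun x => by
    simpa using (hasDerivAt_id x).mul_const h
  have hed : ∀ x ∈ Set.Icc (0:ℝ) 1,
      HasDerivAt e (h • (δ x + (f (U h x) - f (y (x * h))))) x := by
    intro x hx
    have h1 := hUdh x hx
    have h2 := (hy _ (hxh x hx)).scomp x (hmulh x)
    have h3 := h1.sub h2
    refine h3.congr_deriv ?_
    have hδx : δ x = ∑ j ∈ Finset.range s,
      legP j x • (η j h • gam c b (fun z => f (U h z)) j) - f (U h x) := rfl
    rw [hδx, ← smul_sub]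
    congr 1
    abel
  have hUb : ∀ x ∈ Set.Icc (0:ℝ) 1, U h x ∈ Metric.closedBall (0:E) R := fun x hx => by
    rw [mem_closedBall_zero_iff]
    exact (hR₂ _ (hUKh x hx)).trans (le_max_right _ _)
  have hyb : ∀ x ∈ Set.Icc (0:ℝ) 1, y (x * h) ∈ Metric.closedBall (0:E) R := fun x hx => by
    rw [mem_closedBall_zero_iff]
    exact (hR₁ _ (hxh x hx)).trans (le_max_left _ _)
  have he0 : e 0 = 0 := by simp [he, hU0h]
  -- crude estimate
  have hcrude : ∀ x ∈ Set.Icc (0:ℝ) 1, ‖e x‖ ≤ G * (Cd * h ^ (s + 1)) := by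
    refine hG e _ _ (by positivity) hed he0 ?_
    intro x hx
    rw [norm_smul, Real.norm_eq_abs, abs_of_pos hpos]
    have h1 := hδ x hx
    have h2 := hL _ (hUb x hx) _ (hyb x hx)
    calc h * ‖δ x + (f (U h x) - f (y (x * h)))‖
        ≤ h * (Cd * h ^ s + L * ‖e x‖) := by
          refine mul_le_mul_of_nonneg_left ((norm_add_le _ _).trans (add_le_add h1 h2)) hpos.le
      _ = h * (L * ‖e x‖) + Cd * h ^ (s + 1) := by ring
      _ ≤ _ := by
          have : h * (L * ‖e x‖) ≤ L * ‖e x‖ := mul_le_of_le_one_left (by positivity) hle1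
          linarith
  -- the corrected quantity
  set V : ℝ → E := fun x => h • (vpoly s B (x * h)) (δ x) with hV
  have hvc := vpoly_continuous s B
  have hVc : Continuous V := by
    have h1 : Continuous fun x : ℝ => vpoly s B (x * h) := hvc.comp (by fun_prop)
    exact (h1.clm_apply hδc).const_smul h
  set Ψ : ℝ → E := fun x => Z (x * h) (e x) - ∫ τ in (0:ℝ)..x, V τ with hΨ
  have hΨd : ∀ x ∈ Set.Icc (0:ℝ) 1, HasDerivAt Ψ
      (h • (Z (x * h) (f (U h x) - f (y (x * h)) - fderiv ℝ f (y (x * h)) (U h x - y (x * h)))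
        + (Z (x * h) - vpoly s B (x * h)) (δ x))) x := by
    intro x hx
    have h1 := ((hZ _ (hxh x hx)).scomp x (hmulh x)).clm_apply (hed x hx)
    have h2 : HasDerivAt (fun x => ∫ τ in (0:ℝ)..x, V τ) (V x) x :=
      intervalIntegral.integral_hasDerivAt_right (hVc.intervalIntegrable _ _)
        (hVc.stronglyMeasurableAtFilter _ _) hVc.continuousAt
    have h3 := h1.sub h2
    refine h3.congr_deriv ?_
    simp only [hV, he, Function.comp, _root_.smul_apply,
      _root_.neg_apply, ContinuousLinearMap.comp_apply, map_smul, map_add, map_sub,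
      _root_.sub_apply]
    module
  have hΨb := norm_image_sub_le_of_norm_deriv_le_segment_01' (f := Ψ) (C := C₁ * h ^ (2 * s + 1))
    (fun x hx => (hΨd x hx).hasDerivWithinAt) (by
      intro x hx'
      have hx : x ∈ Set.Icc (0:ℝ) 1 := ⟨hx'.1, hx'.2.le⟩
      rw [norm_smul, Real.norm_eq_abs, abs_of_pos hpos]
      have a1 := hL₂ _ (hUb x hx) _ (hyb x hx)
      have a2 : ‖U h x - y (x * h)‖ ≤ G * (Cd * h ^ (s + 1)) := hcrude x hx
      have a3 : ‖Z (x * h) (f (U h x) - f (y (x * h)) -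
          fderiv ℝ f (y (x * h)) (U h x - y (x * h)))‖ ≤
          MZ * (L₂ * (G * (Cd * h ^ (s + 1))) ^ 2) := by
        refine (ContinuousLinearMap.le_opNorm _ _).trans ?_
        refine mul_le_mul (hMZ _ (hxh x hx)) (a1.trans ?_) (norm_nonneg _) hMZ0
        gcongr
      have a4 : ‖(Z (x * h) - vpoly s B (x * h)) (δ x)‖ ≤ CB * h ^ s * (Cd * h ^ s) := by
        refine (ContinuousLinearMap.le_opNorm _ _).trans ?_
        refine mul_le_mul ((hCB _ (hxh x hx)).trans ?_) (hδ x hx) (norm_nonneg _) (by positivity)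
        have : x * h ≤ h := mul_le_of_le_one_left hpos.le hx.2
        have : 0 ≤ x * h := (hxh x hx).1
        gcongr
      calc _ ≤ h * (MZ * (L₂ * (G * (Cd * h ^ (s + 1))) ^ 2) + CB * h ^ s * (Cd * h ^ s)) :=
            mul_le_mul_of_nonneg_left ((norm_add_le _ _).trans (add_le_add a3 a4)) hpos.le
        _ = (MZ * (L₂ * (G * Cd) ^ 2)) * h ^ (2 * s + 1) * h ^ 2 + CB * Cd * h ^ (2 * s + 1) := by
            ring
        _ ≤ (MZ * (L₂ * (G * Cd) ^ 2)) * h ^ (2 * s + 1) * 1 + CB * Cd * h ^ (2 * s + 1) := by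
            have : h ^ 2 ≤ 1 := pow_le_one₀ hpos.le hle1
            gcongr
        _ = _ := by rw [hC₁]; ring)
  -- the integral
  have hint : ‖∫ τ in (0:ℝ)..1, V τ‖ ≤ C₂ * h ^ (2 * s + 1) := by
    have e1 : ∀ τ, V τ = ∑ i ∈ Finset.range s, h ^ (i + 1) • (B i) (τ ^ i • δ τ) := by
      intro τ
      simp only [hV, vpoly, _root_.sum_apply, _root_.smul_apply,
        Finset.smul_sum, map_smul, smul_smul]
      refine Finset.sum_congr rfl fun i _ => ?_
      congr 1
      ring
    simp only [e1]
    rw [intervalIntegral.integral_finsetSum fun i _ =>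
      Continuous.intervalIntegrable (by fun_prop) _ _]
    refine (norm_sum_le _ _).trans ?_
    rw [hC₂, Finset.sum_mul]
    refine Finset.sum_le_sum fun i hi => ?_
    have his := Finset.mem_range.1 hi
    rw [intervalIntegral.integral_smul, ContinuousLinearMap.intervalIntegral_comp_comm _
      (Continuous.intervalIntegrable (by fun_prop) _ _), norm_smul, Real.norm_eq_abs,
      abs_of_pos (by positivity)]
    calc _ ≤ h ^ (i + 1) * (‖B i‖ * (Cm i * h ^ (2 * s - i))) := by
          have := hm i hi
          gcongr
          exact ((B i).le_opNorm _).trans (by gcongr)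
      _ = ‖B i‖ * Cm i * h ^ ((i + 1) + (2 * s - i)) := by rw [pow_add]; ring
      _ = _ := by congr 2; omega
  have hΨ0 : Ψ 0 = 0 := by simp [hΨ, he0]
  have hΨ1 : Ψ 1 = Z h (e 1) - ∫ τ in (0:ℝ)..1, V τ := by simp [hΨ]
  have hZe : ‖Z h (e 1)‖ ≤ (C₁ + C₂) * h ^ (2 * s + 1) := by
    have : Z h (e 1) = (Ψ 1 - Ψ 0) + ∫ τ in (0:ℝ)..1, V τ := by rw [hΨ0, hΨ1]; abel
    rw [this, add_mul]
    exact (norm_add_le _ _).trans (add_le_add hΨb hint)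
  have he1 : ‖e 1‖ ≤ 2 * ‖Z h (e 1)‖ := by
    have h1 : e 1 = Z h (e 1) + (1 - Z h) (e 1) := by simp
    have h2 : ‖(1 - Z h) (e 1)‖ ≤ 1 / 2 * ‖e 1‖ :=
      ((1 - Z h).le_opNorm _).trans (by gcongr)
    have h3 : ‖e 1‖ ≤ ‖Z h (e 1)‖ + ‖(1 - Z h) (e 1)‖ := by
      conv_lhs => rw [h1]
      exact norm_add_le _ _
    linarith
  have : U h 1 - y h = e 1 := by simp [he]
  rw [this]
  linarith

end final

section mainaux

open Filter Topology

lemma field_contDiff (m : ℕ) (H : ESp m → ℝ) (hH : ContDiff ℝ (⊤ : ℕ∞) H) :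
    ContDiff ℝ (⊤ : ℕ∞) (fun z => Matrix.toEuclideanLin (Jmat m) (gradient H z)) := by
  have h1 : ContDiff ℝ (⊤ : ℕ∞) (fderiv ℝ H) := hH.fderiv_right (by norm_cast)
  have h2 : ContDiff ℝ (⊤ : ℕ∞) (gradient H) :=
    (InnerProductSpace.toDual ℝ (ESp m)).symm.toContinuousLinearEquiv.contDiff.comp h1
  exact (LinearMap.toContinuousLinearMap (Matrix.toEuclideanLin (Jmat m))).contDiff.comp h2

lemma ode_uniq {E : Type*} [NormedAddCommGroup E] [NormedSpace ℝ E] [FiniteDimensional ℝ E]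
    (f : E → E) (hf : ContDiff ℝ (⊤ : ℕ∞) f) (y z : ℝ → E) (T : ℝ)
    (hy : ∀ t ∈ Set.Icc 0 T, HasDerivAt y (f (y t)) t)
    (hz : ∀ t ∈ Set.Icc 0 T, HasDerivAt z (f (z t)) t) (h0 : y 0 = z 0) :
    Set.EqOn y z (Set.Icc 0 T) := by
  have hyc : ContinuousOn y (Set.Icc 0 T) := fun t ht => (hy t ht).continuousAt.continuousWithinAt
  have hzc : ContinuousOn z (Set.Icc 0 T) := fun t ht => (hz t ht).continuousAt.continuousWithinAt
  obtain ⟨R₁, hR₁⟩ := isCompact_Icc.exists_bound_of_continuousOn hyc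
  obtain ⟨R₂, hR₂⟩ := isCompact_Icc.exists_bound_of_continuousOn hzc
  obtain ⟨L, hL0, hL⟩ := lip_ball f hf (max R₁ R₂)
  refine ODE_solution_unique_of_mem_Icc_right (v := fun _ => f)
    (s := fun _ => Metric.closedBall (0:E) (max R₁ R₂)) (K := ⟨L, hL0⟩) ?_ hyc
    (fun t ht => (hy t ⟨ht.1, ht.2.le⟩).hasDerivWithinAt) ?_ hzc
    (fun t ht => (hz t ⟨ht.1, ht.2.le⟩).hasDerivWithinAt) ?_ h0
  · intro t _
    refine LipschitzOnWith.of_dist_le_mul fun u hu v hv => ?_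
    rw [dist_eq_norm, dist_eq_norm]
    exact hL u hu v hv
  · intro t ht
    rw [mem_closedBall_zero_iff]
    exact (hR₁ t ⟨ht.1, ht.2.le⟩).trans (le_max_left _ _)
  · intro t ht
    rw [mem_closedBall_zero_iff]
    exact (hR₂ t ⟨ht.1, ht.2.le⟩).trans (le_max_right _ _)

lemma ev_Ioc {a : ℝ} (ha : 0 < a) : ∀ᶠ h in 𝓝[>] (0:ℝ), h ∈ Set.Ioc 0 a :=
  Ioc_mem_nhdsGT ha

end mainaux

/-- Theorem 5 of the paper.  Let `y` solve `y' = J∇H(y)`, `y(0) = y₀`,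
and for `h ∈ (0,h₀]` let `u_h ∈ Π_s` with `u_h(0) = y₀` and range in a fixed compact set
satisfy `u_h'(ch) = ∑_{j<s} P_j(c) η̂_j(h) γ̂_j(h)` with
`γ̂_j(h) = ∑_ℓ b_ℓ P_j(c_ℓ) J∇H(u_h(c_ℓ h))` (quadrature exact on `Π_{2k-1}`, `k ≥ s`),
`η̂_j(h) = 1` for `j ≤ s-ν-1` and `η̂_j(h) = 1 - h^{2(s-1-j)} α̂_j(h)` with
`α̂_j(h) = O(h²)` otherwise.  Then `‖u_h(h) - y(h)‖ = O(h^{2s+1})`: the method has order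
`2s`. -/
theorem stmt16 (m : ℕ) (hm : 1 ≤ m)
    (H : ESp m → ℝ) (hH : ContDiff ℝ (⊤ : ℕ∞) H)
    (h₀ : ℝ) (hh₀ : 0 < h₀)
    (y₀ : ESp m) (y : ℝ → ESp m) (hy0 : y 0 = y₀)
    (hy : ∀ t ∈ Set.Icc 0 h₀,
      HasDerivAt y (Matrix.toEuclideanLin (Jmat m) (gradient H (y t))) t)
    (s ν k : ℕ) (hν : 1 ≤ ν) (hνs : ν < s) (hk : s ≤ k)
    (c b : Fin k → ℝ) (hc : ∀ ℓ, c ℓ ∈ Set.Icc (0:ℝ) 1)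
    (hquad : ∀ q : Polynomial ℝ, q.natDegree ≤ 2 * k - 1 →
      ∑ ℓ, b ℓ * q.eval (c ℓ) = ∫ x in (0:ℝ)..1, q.eval x)
    (u : ℝ → ℝ → ESp m)
    (hu0 : ∀ h ∈ Set.Ioc (0:ℝ) h₀, u h 0 = y₀)
    (hupoly : ∀ h ∈ Set.Ioc (0:ℝ) h₀,
      ∃ a : Fin (s + 1) → ESp m, ∀ t : ℝ, u h t = ∑ i : Fin (s + 1), t ^ (i : ℕ) • a i)
    (K : Set (ESp m)) (hK : IsCompact K)
    (huK : ∀ h ∈ Set.Ioc (0:ℝ) h₀, ∀ t ∈ Set.Icc 0 h, u h t ∈ K)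
    (α : ℕ → ℝ → ℝ)
    (hα : ∀ j, s - ν ≤ j → j ≤ s - 1 →
      ∃ C > (0:ℝ), ∃ h₁ > (0:ℝ), ∀ h : ℝ, 0 < h → h ≤ h₁ → |α j h| ≤ C * h ^ 2)
    (η : ℕ → ℝ → ℝ)
    (hη₁ : ∀ j, j ≤ s - ν - 1 → ∀ h : ℝ, η j h = 1)
    (hη₂ : ∀ j, s - ν ≤ j → j ≤ s - 1 → ∀ h : ℝ,
      η j h = 1 - h ^ (2 * (s - 1 - j)) * α j h)
    (hu' : ∀ h ∈ Set.Ioc (0:ℝ) h₀, ∀ cc ∈ Set.Icc (0:ℝ) 1,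
      HasDerivAt (u h)
        (∑ j ∈ Finset.range s, legP j cc •
          (η j h • ∑ ℓ, (b ℓ * legP j (c ℓ)) •
            Matrix.toEuclideanLin (Jmat m) (gradient H (u h (c ℓ * h)))))
        (cc * h)) :
    ∃ C > (0:ℝ), ∃ h₁ > (0:ℝ), ∀ h : ℝ, 0 < h → h ≤ min h₀ h₁ →
      ‖u h h - y h‖ ≤ C * h ^ (2 * s + 1) := by
  classical
  set f : ESp m → ESp m := fun z => Matrix.toEuclideanLin (Jmat m) (gradient H z) with hfdef
  have hf : ContDiff ℝ (⊤ : ℕ∞) f := field_contDiff m H hH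
  obtain ⟨ε, hε, z, Z, hz0, hZ0, hz, hZ, hZt⟩ := exists_Z f hf y₀
  have hZt' := hZt (s - 1)
  have hs1 : s - 1 + 1 = s := by omega
  rw [hs1] at hZt'
  have hev := ev_Ioc hh₀
  have hmulh : ∀ h x : ℝ, HasDerivAt (fun x : ℝ => x * h) h x := fun h x => by
    simpa using (hasDerivAt_id x).mul_const h
  obtain ⟨C, hC0, hC⟩ := final_bound (by omega : 1 ≤ s) hk c b hc hquad f hf K hK
    (fun h x => u h (x * h))
    (by
      filter_upwards [hev] with h hh x hx
      exact huK h hh _ ⟨mul_nonneg hx.1 hh.1.le, mul_le_of_le_one_left hh.1.le hx.2⟩)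
    (by
      filter_upwards [hev] with h hh
      obtain ⟨a, ha⟩ := hupoly h hh
      simp only [ha]
      fun_prop)
    η
    (by
      intro j hj
      by_cases hjν : j ≤ s - ν - 1
      · refine ⟨0, le_rfl, Filter.Eventually.of_forall fun h => ?_⟩
        simp [hη₁ j hjν h]
      · have h1 : s - ν ≤ j := by omega
        have h2 : j ≤ s - 1 := by omega
        obtain ⟨C, hC, h₁, hh₁, hb⟩ := hα j h1 h2
        refine ⟨C, hC.le, ?_⟩
        filter_upwards [ev_Ioc hh₁] with h hh
        have hb' := hb h hh.1 hh.2
        rw [hη₂ j h1 h2 h, sub_sub_cancel, abs_mul, abs_of_nonneg (pow_nonneg hh.1.le _)]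
        calc _ ≤ h ^ (2 * (s - 1 - j)) * (C * h ^ 2) :=
              mul_le_mul_of_nonneg_left hb' (pow_nonneg hh.1.le _)
          _ = C * h ^ (2 * (s - 1 - j) + 2) := by rw [pow_add]; ring
          _ = _ := by congr 2; omega)
    (by
      filter_upwards [hev] with h hh x hx
      exact (hu' h hh x hx).scomp x (hmulh h x))
    z Z ε hε hZ0
    (by
      filter_upwards [hev] with h hh
      simp only [zero_mul]
      rw [hu0 h hh, hz0])
    hz hZ hZt'
  have hyz : Set.EqOn y z (Set.Icc 0 (min ε h₀)) :=
    ode_uniq f hf y z _ (fun t ht => hy t ⟨ht.1, ht.2.trans (min_le_right _ _)⟩)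
      (fun t ht => hz t ⟨ht.1, ht.2.trans (min_le_left _ _)⟩) (by rw [hy0, hz0])
  have hfin := hC.and (ev_Ioc (lt_min hε hh₀))
  obtain ⟨h₁, hh₁, hsub⟩ := mem_nhdsGT_iff_exists_Ioc_subset.1 hfin
  refine ⟨C + 1, by linarith, h₁, hh₁, fun h hpos hle => ?_⟩
  obtain ⟨hb, hI⟩ := hsub ⟨hpos, hle.trans (min_le_right _ _)⟩
  simp only [one_mul] at hb
  rw [hyz ⟨hI.1.le, hI.2⟩]
  refine hb.trans (mul_le_mul_of_nonneg_right (by linarith) (by positivity))
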